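/- Suppose C is even under γ and associative on F_3. Then for every n ≥ 1 and every n-multilinear-map-valued function f_n on M_n that is either even or odd with respect to γ, one has (b(b f_n))(x_1,…,x_{n+2}) = 0 for all (x_1,…,x_{n+2}) ∈ F_{n+2}, where each application of b uses the even or odd formula according to the parity of its argument. -/

import Mathlib

/-!
The coboundary `b` is a Hochschild differential, and `b ∘ b = 0` is the usual cancellation, with
associativity available exactly where the chain domain provides it.

Up to a global sign both formulas for `b` are one operator `cobG C g`, with `g = id` (even) or
`g = γ` (odd) twisting the left action; evenness of `C` under the involution `γ` says that
`g (C x y u w) = C x y (g u) (g w)` whenever `x ≠ y`. The global sign disappears on squaring.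
Write `cobG = L + M + R`: the left action, the alternating sum of inner faces (merge two
neighbouring vectors and drop the left one of their points), and the right action.

* `InChain.triple`: if `x` lies in the chain domain and `a < b < c`, then
  `r_{ab} < r_{bc} < r_{ac}`. For fixed `c` the distances `r_{jc}` decrease in `j`, and `r_{0j}`
  increases in `j`, so `r_{ab} ≤ r_{0b} ≤ r_{0,c-1} < r_{c-1,c} ≤ r_{bc} < r_{ac}`. Hence `C` is
  associative on every increasing triple of the points.
* `faceX_faceX`, `faceV_faceV`: the inner faces satisfy the presimplicial identities, so
  `M M = 0` (`opM_opM`).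
* `M L = -L L - L M` (`opM_opL`), `M R = -R M - R R` (`opM_opR`) and `R L = -L R` (`opR_opL`): in
  each a single use of associativity, involving the first or the last point, and otherwise
  reindexing.

The nine compositions therefore add up to zero.
-/

noncomputable section

abbrev Pt (D : ℕ) : Type := EuclideanSpace ℝ (Fin D)

variable {D : ℕ} {V : Type*} [AddCommGroup V] [Module ℂ V]

/-- The chain condition defining the domain `F_m`. -/
def InChain {m : ℕ} (x : Fin m → Pt D) : Prop :=
  ∀ (i : ℕ) (hi : i + 1 < m),
    dist (x ⟨0, by omega⟩) (x ⟨i, by omega⟩) < dist (x ⟨i, by omega⟩) (x ⟨i + 1, hi⟩) ∧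
    ∀ (j : ℕ) (hj : j + 1 ≤ i),
      dist (x ⟨j + 1, by omega⟩) (x ⟨i + 1, hi⟩) < dist (x ⟨j, by omega⟩) (x ⟨i + 1, hi⟩)

def IsBilin (C : Pt D → Pt D → V → V → V) : Prop :=
  ∀ x y : Pt D, (∀ w : V, IsLinearMap ℂ fun u => C x y u w) ∧ (∀ u : V, IsLinearMap ℂ (C x y u))

def AssocF3 (C : Pt D → Pt D → V → V → V) : Prop :=
  ∀ x₁ x₂ x₃ : Pt D, dist x₁ x₂ < dist x₂ x₃ → dist x₂ x₃ < dist x₁ x₃ →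
    ∀ u v w : V, C x₂ x₃ (C x₁ x₂ u v) w = C x₁ x₃ u (C x₂ x₃ v w)

def IsMulti {n : ℕ} (f : (Fin n → Pt D) → (Fin n → V) → V) : Prop :=
  ∀ (x : Fin n → Pt D) (v : Fin n → V) (i : Fin n),
    IsLinearMap ℂ fun u => f x (Function.update v i u)

/-- The Hochschild-type coboundary `b` (even version). -/
def cobE (C : Pt D → Pt D → V → V → V) {n : ℕ}
    (f : (Fin n → Pt D) → (Fin n → V) → V) :
    (Fin (n + 1) → Pt D) → (Fin (n + 1) → V) → V :=
  fun x v =>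
    C (x 0) (x (Fin.last n)) (v 0) (f (fun j => x j.succ) fun j => v j.succ)
      + (∑ k : Fin n, ((-1 : ℂ) ^ ((k : ℕ) + 1)) •
          f (fun j => x (k.castSucc.succAbove j)) fun j =>
            if (j : ℕ) < (k : ℕ) then v j.castSucc
            else if j = k then C (x k.castSucc) (x k.succ) (v k.castSucc) (v k.succ)
            else v j.succ)
      + ((-1 : ℂ) ^ (n + 1)) •
          C (x ⟨n - 1, by omega⟩) (x (Fin.last n))
            (f (fun j => x j.castSucc) fun j => v j.castSucc) (v (Fin.last n))

def gConj (γ : V → V) {n : ℕ} (f : (Fin n → Pt D) → (Fin n → V) → V) :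
    (Fin n → Pt D) → (Fin n → V) → V :=
  fun x v => γ (f x fun j => γ (v j))

def IsEvenC (γ : V → V) {n : ℕ} (f : (Fin n → Pt D) → (Fin n → V) → V) : Prop :=
  ∀ x v, gConj γ f x v = f x v

def IsOddC (γ : V → V) {n : ℕ} (f : (Fin n → Pt D) → (Fin n → V) → V) : Prop :=
  ∀ x v, gConj γ f x v = - f x v

/-- The BRST coboundary `B`. -/
def Bop (γ s : V → V) {n : ℕ} (f : (Fin n → Pt D) → (Fin n → V) → V) :
    (Fin n → Pt D) → (Fin n → V) → V :=
  fun x v =>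
    s (f x v) - ∑ i : Fin n, gConj γ f x fun j =>
      if (j : ℕ) < (i : ℕ) then γ (v j) else if j = i then s (v j) else v j

/-- The Hochschild-type coboundary `b` (odd version). -/
def cobO (C : Pt D → Pt D → V → V → V) (γ : V → V) {n : ℕ}
    (f : (Fin n → Pt D) → (Fin n → V) → V) :
    (Fin (n + 1) → Pt D) → (Fin (n + 1) → V) → V :=
  fun x v =>
    -C (x 0) (x (Fin.last n)) (γ (v 0)) (f (fun j => x j.succ) fun j => v j.succ)
      - (∑ k : Fin n, ((-1 : ℂ) ^ ((k : ℕ) + 1)) •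
          f (fun j => x (k.castSucc.succAbove j)) fun j =>
            if (j : ℕ) < (k : ℕ) then v j.castSucc
            else if j = k then C (x k.castSucc) (x k.succ) (v k.castSucc) (v k.succ)
            else v j.succ)
      - ((-1 : ℂ) ^ (n + 1)) •
          C (x ⟨n - 1, by omega⟩) (x (Fin.last n))
            (f (fun j => x j.castSucc) fun j => v j.castSucc) (v (Fin.last n))

def toC2 (Cj : Pt D → Pt D → V → V → V) : (Fin 2 → Pt D) → (Fin 2 → V) → V :=
  fun x v => Cj (x 0) (x 1) (v 0) (v 1)

def oneC (t : V → V) : (Fin 1 → Pt D) → (Fin 1 → V) → V := fun _ v => t (v 0)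

/-! ### The coboundary as left, inner and right terms -/

/-- The points `x` with `x_k` removed. -/
def faceX {n : ℕ} (k : Fin n) (x : Fin (n + 1) → Pt D) : Fin n → Pt D :=
  fun j => x (k.castSucc.succAbove j)

/-- The vectors `v` with `v_k`, `v_{k+1}` replaced by their product at `(x_k, x_{k+1})`. -/
def faceV (C : Pt D → Pt D → V → V → V) {n : ℕ} (k : Fin n) (x : Fin (n + 1) → Pt D)
    (v : Fin (n + 1) → V) : Fin n → V :=
  fun j => if (j : ℕ) < (k : ℕ) then v j.castSucc
    else if j = k then C (x k.castSucc) (x k.succ) (v k.castSucc) (v k.succ)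
    else v j.succ

/-- The left-action term of the coboundary, with the acting vector twisted by `g`. -/
def opL (C : Pt D → Pt D → V → V → V) (g : V → V) {n : ℕ}
    (f : (Fin n → Pt D) → (Fin n → V) → V) :
    (Fin (n + 1) → Pt D) → (Fin (n + 1) → V) → V :=
  fun x v => C (x 0) (x (Fin.last n)) (g (v 0)) (f (fun j => x j.succ) fun j => v j.succ)

/-- The alternating sum of the inner faces in the coboundary. -/
def opM (C : Pt D → Pt D → V → V → V) {n : ℕ} (f : (Fin n → Pt D) → (Fin n → V) → V) :
    (Fin (n + 1) → Pt D) → (Fin (n + 1) → V) → V :=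
  fun x v => ∑ k : Fin n, ((-1 : ℂ) ^ ((k : ℕ) + 1)) • f (faceX k x) (faceV C k x v)

/-- The right-action term of the coboundary, including its sign. -/
def opR (C : Pt D → Pt D → V → V → V) {n : ℕ} (f : (Fin n → Pt D) → (Fin n → V) → V) :
    (Fin (n + 1) → Pt D) → (Fin (n + 1) → V) → V :=
  fun x v => ((-1 : ℂ) ^ (n + 1)) •
    C (x ⟨n - 1, by omega⟩) (x (Fin.last n))
      (f (fun j => x j.castSucc) fun j => v j.castSucc) (v (Fin.last n))

/-- The coboundary with the left action twisted by `g`. Up to a global sign, the even formula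
is the case `g = id` and the odd formula the case `g = γ`. -/
def cobG (C : Pt D → Pt D → V → V → V) (g : V → V) {n : ℕ}
    (f : (Fin n → Pt D) → (Fin n → V) → V) :
    (Fin (n + 1) → Pt D) → (Fin (n + 1) → V) → V :=
  fun x v => opL C g f x v + opM C f x v + opR C f x v

theorem cobE_eq (C : Pt D → Pt D → V → V → V) {n : ℕ}
    (f : (Fin n → Pt D) → (Fin n → V) → V) : cobE C f = cobG C id f := rfl

theorem cobO_eq (C : Pt D → Pt D → V → V → V) (γ : V → V) {n : ℕ}
    (f : (Fin n → Pt D) → (Fin n → V) → V) :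
    cobO C γ f = fun x v => -cobG C γ f x v := by
  funext x v
  have h : ∀ a b c : V, -a - b - c = -(a + b + c) := by intros; abel
  exact h _ _ _

theorem cobG_neg {C : Pt D → Pt D → V → V → V} (hbil : IsBilin C) (g : V → V) {n : ℕ}
    (f : (Fin n → Pt D) → (Fin n → V) → V) (x : Fin (n + 1) → Pt D) (v : Fin (n + 1) → V) :
    cobG C g (fun y w => -f y w) x v = -cobG C g f x v := by
  have h1 : ∀ p q u w, C p q u (-w) = -C p q u w := fun p q u w => ((hbil p q).2 u).map_neg w
  have h2 : ∀ p q u w, C p q (-u) w = -C p q u w := fun p q u w => ((hbil p q).1 w).map_neg u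
  simp only [cobG, opL, opM, opR, h1, h2, smul_neg, Finset.sum_neg_distrib, neg_add]

theorem cobG_add {C : Pt D → Pt D → V → V → V} (hbil : IsBilin C) (g : V → V) {n : ℕ}
    (f f' : (Fin n → Pt D) → (Fin n → V) → V) (x : Fin (n + 1) → Pt D) (v : Fin (n + 1) → V) :
    cobG C g (fun y w => f y w + f' y w) x v = cobG C g f x v + cobG C g f' x v := by
  have h1 : ∀ p q u w w', C p q u (w + w') = C p q u w + C p q u w' :=
    fun p q u w w' => ((hbil p q).2 u).map_add w w'
  have h2 : ∀ p q u u' w, C p q (u + u') w = C p q u w + C p q u' w :=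
    fun p q u u' w => ((hbil p q).1 w).map_add u u'
  simp only [cobG, opL, opM, opR, h1, h2, smul_add, Finset.sum_add_distrib]
  abel

/-! ### Distances on the chain domain -/

/-- On the chain domain every increasing triple of points lies in `F₃`. -/
theorem InChain.triple {m : ℕ} {x : Fin m → Pt D} (hx : InChain x) (a b c : Fin m)
    (hab : a < b) (hbc : b < c) :
    dist (x a) (x b) < dist (x b) (x c) ∧ dist (x b) (x c) < dist (x a) (x c) := by
  -- For fixed `c` the distance to `x c` decreases in the other index.
  have anti : ∀ (d i j : ℕ) (hij : i + d = j) (c : ℕ) (hc : c < m) (hj : j < c),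
      dist (x ⟨j, by omega⟩) (x ⟨c, hc⟩) ≤ dist (x ⟨i, by omega⟩) (x ⟨c, hc⟩) ∧
      (0 < d → dist (x ⟨j, by omega⟩) (x ⟨c, hc⟩) < dist (x ⟨i, by omega⟩) (x ⟨c, hc⟩)) := by
    intro d
    induction d with
    | zero => rintro i j rfl c hc hj; exact ⟨le_rfl, fun h => absurd h (lt_irrefl _)⟩
    | succ d ih =>
      rintro i j rfl c hc hj
      obtain ⟨e, rfl⟩ : ∃ e, c = e + 1 := ⟨c - 1, by omega⟩
      have h1 := (ih i (i + d) rfl (e + 1) hc (by omega)).1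
      have h2 : dist (x ⟨i + (d + 1), by omega⟩) (x ⟨e + 1, hc⟩) <
          dist (x ⟨i + d, by omega⟩) (x ⟨e + 1, hc⟩) := (hx e hc).2 (i + d) (by omega)
      exact ⟨(h2.trans_le h1).le, fun _ => h2.trans_le h1⟩
  -- The distance to the first point increases.
  have mono : ∀ (d i j : ℕ) (hij : i + d = j) (hj : j < m),
      dist (x ⟨0, by omega⟩) (x ⟨i, by omega⟩) ≤ dist (x ⟨0, by omega⟩) (x ⟨j, hj⟩) := by
    intro d
    induction d with
    | zero => rintro i j rfl hj; exact le_rfl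
    | succ d ih =>
      rintro i j rfl hj
      have h1 := ih i (i + d) rfl (by omega)
      have h2 := (hx (i + d) hj).1
      have h3 := (anti (i + d) 0 (i + d) (by omega) (i + d + 1) hj (by omega)).1
      exact (h1.trans h2.le).trans h3
  obtain ⟨a, ha⟩ := a
  obtain ⟨b, hb⟩ := b
  obtain ⟨c, hc⟩ := c
  simp only [Fin.mk_lt_mk] at hab hbc
  refine ⟨?_, (anti (b - a) a b (by omega) c hc hbc).2 (by omega)⟩
  obtain ⟨e, rfl⟩ : ∃ e, c = e + 1 := ⟨c - 1, by omega⟩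
  have h1 := (anti a 0 a (by omega) b hb hab).1
  have h2 := mono (e - b) b e (by omega) (by omega)
  have h3 := (hx e hc).1
  have h4 := (anti (e - b) b e (by omega) (e + 1) hc (by omega)).1
  linarith

/-! ### Presimplicial identities -/

theorem faceX_apply {n : ℕ} (k : Fin n) (x : Fin (n + 1) → Pt D) (j : Fin n) :
    faceX k x j = if (j : ℕ) < (k : ℕ) then x j.castSucc else x j.succ := by
  simp only [faceX, Fin.succAbove, Fin.lt_def, Fin.val_castSucc]
  split_ifs <;> rfl

/-- The presimplicial identity for points. -/
theorem faceX_faceX {n : ℕ} (x : Fin (n + 2) → Pt D) (k : Fin (n + 1)) (l : Fin n)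
    (hkl : (k : ℕ) ≤ l) :
    faceX l (faceX k x) = faceX ⟨k, by omega⟩ (faceX l.succ x) := by
  funext j
  simp only [faceX_apply, Fin.val_castSucc, Fin.val_succ]
  split_ifs <;> first | omega | rfl

/-- The presimplicial identity for vectors; the case `k = l` is associativity. -/
theorem faceV_faceV {C : Pt D → Pt D → V → V → V} (hassoc : AssocF3 C) {n : ℕ}
    {x : Fin (n + 2) → Pt D} (hx : InChain x)
    (v : Fin (n + 2) → V) (k : Fin (n + 1)) (l : Fin n) (hkl : (k : ℕ) ≤ l) :
    faceV C l (faceX k x) (faceV C k x v) =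
      faceV C ⟨k, by omega⟩ (faceX l.succ x) (faceV C l.succ x v) := by
  obtain ⟨k, hk⟩ := k
  obtain ⟨l, hl⟩ := l
  funext ⟨j, hj⟩
  simp only at hkl
  rcases hkl.eq_or_lt with rfl | hlt
  · have h := hx.triple ⟨k, by omega⟩ ⟨k + 1, by omega⟩ ⟨k + 2, by omega⟩
      (by simp [Fin.lt_def]) (by simp [Fin.lt_def])
    have := hassoc _ _ _ h.1 h.2 (v ⟨k, by omega⟩) (v ⟨k + 1, by omega⟩) (v ⟨k + 2, by omega⟩)
    rcases eq_or_ne j k with rfl | hjk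
    · simpa [faceV, faceX_apply] using this
    · simp only [faceV, faceX_apply, Fin.val_castSucc, Fin.val_succ, Fin.ext_iff]
      split_ifs <;> first | omega | rfl
  · simp only [faceV, faceX_apply, Fin.val_castSucc, Fin.val_succ, Fin.ext_iff]
    split_ifs <;> first | omega | rfl

/-- The cancellation scheme of a presimplicial object: the pairs `(k, l)` with `k ≤ l` are
matched with the pairs `(l + 1, k)`. -/
theorem sum_face_face_eq_zero {n : ℕ} (T : Fin (n + 1) → Fin n → V)
    (hT : ∀ (k : Fin (n + 1)) (l : Fin n) (h : (k : ℕ) ≤ l), T k l = T l.succ ⟨k, by omega⟩) :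
    ∑ k : Fin (n + 1), ∑ l : Fin n,
      ((-1 : ℂ) ^ ((k : ℕ) + 1)) • ((-1 : ℂ) ^ ((l : ℕ) + 1)) • T k l = 0 := by
  rw [← Finset.sum_product', ← Finset.sum_filter_add_sum_filter_not _
    (fun p : Fin (n + 1) × Fin n => (p.1 : ℕ) ≤ p.2), ← eq_neg_iff_add_eq_zero,
    ← Finset.sum_neg_distrib]
  refine Finset.sum_bij' (fun p hp => (p.2.succ, ⟨p.1, ?_⟩))
    (fun p hp => (p.2.castSucc, ⟨p.1 - 1, ?_⟩)) ?_ ?_ ?_ ?_ ?_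
  · have := (Finset.mem_filter.1 hp).2; omega
  · have := (Finset.mem_filter.1 hp).2; omega
  · rintro ⟨k, l⟩ hp
    simp only [Finset.mem_filter, Finset.mem_product, Finset.mem_univ, true_and, Fin.val_succ] at hp ⊢
    omega
  · rintro ⟨k, l⟩ hp
    simp only [Finset.mem_filter, Finset.mem_product, Finset.mem_univ, true_and,
      Fin.val_castSucc] at hp ⊢
    omega
  · rintro ⟨k, l⟩ hp
    simp
  · rintro ⟨k, l⟩ hp
    have := (Finset.mem_filter.1 hp).2
    simp only [Prod.mk.injEq, Fin.ext_iff, Fin.val_succ, Fin.val_castSucc, and_true] at this ⊢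
    omega
  · rintro ⟨k, l⟩ hp
    have := (Finset.mem_filter.1 hp).2
    simp only [Fin.val_succ] at this ⊢
    rw [hT k l this, smul_smul, smul_smul, ← neg_smul]
    congr 1
    ring

/-! ### Compositions of the terms -/

/-- The inner faces form a presimplicial object, so their alternating sum squares to zero. -/
theorem opM_opM {C : Pt D → Pt D → V → V → V} (hassoc : AssocF3 C)
    {n : ℕ} (f : (Fin n → Pt D) → (Fin n → V) → V) {x : Fin (n + 2) → Pt D} (hx : InChain x)
    (v : Fin (n + 2) → V) : opM C (opM C f) x v = 0 := by
  simp only [opM, Finset.smul_sum]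
  exact sum_face_face_eq_zero
    (fun (k : Fin (n + 1)) (l : Fin n) => f (faceX l (faceX k x))
      (faceV C l (faceX k x) (faceV C k x v)))
    (fun k l h => by simp only [faceX_faceX x k l h, faceV_faceV hassoc hx v k l h])

/-- The left and right terms anticommute: associativity at the points `x_0`, `x_{n+1}` and the
last one exchanges the two actions, and the signs differ by one. -/
theorem opR_opL {C : Pt D → Pt D → V → V → V} (hbil : IsBilin C) (hassoc : AssocF3 C)
    (g : V → V) {n : ℕ} (f : (Fin (n + 1) → Pt D) → (Fin (n + 1) → V) → V)
    {x : Fin (n + 3) → Pt D} (hx : InChain x) (v : Fin (n + 3) → V) :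
    opR C (opL C g f) x v = -opL C g (opR C f) x v := by
  have smulR : ∀ p q u (c : ℂ) w, C p q u (c • w) = c • C p q u w :=
    fun p q u c w => ((hbil p q).2 u).map_smul c w
  have h := hx.triple 0 ⟨n + 1, by omega⟩ (Fin.last _)
    (by simp [Fin.lt_def]) (by simp [Fin.lt_def])
  simp only [opR, opL, smulR]
  rw [pow_succ, mul_neg_one, neg_smul]
  exact congrArg (fun z => -((-1 : ℂ) ^ (n + 1 + 1) • z)) (hassoc _ _ _ h.1 h.2 _ _ _)

/-- The inner face `0` of the left term is the iterated left action, by associativity and the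
compatibility of `g` with `C`; the other inner faces act on the argument of the left term. -/
theorem opM_opL {C : Pt D → Pt D → V → V → V} (hbil : IsBilin C) (hassoc : AssocF3 C)
    (g : V → V) (hg : ∀ p q : Pt D, p ≠ q → ∀ u w, g (C p q u w) = C p q (g u) (g w))
    {n : ℕ} (f : (Fin (n + 1) → Pt D) → (Fin (n + 1) → V) → V)
    {x : Fin (n + 3) → Pt D} (hx₁ : Function.Injective x) (hx : InChain x)
    (v : Fin (n + 3) → V) :
    opM C (opL C g f) x v = -opL C g (opL C g f) x v - opL C g (opM C f) x v := by
  have smulR : ∀ p q u (c : ℂ) w, C p q u (c • w) = c • C p q u w :=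
    fun p q u c w => ((hbil p q).2 u).map_smul c w
  have sumR : ∀ p q u (F : Fin (n + 1) → V), C p q u (∑ k, F k) = ∑ k, C p q u (F k) :=
    fun p q u F => map_sum ((hbil p q).2 u).mk' F Finset.univ
  have h := hx.triple 0 1 (Fin.last _) (by simp [Fin.lt_def]) (by simp [Fin.lt_def])
  have h01 : x 0 ≠ x 1 := fun e => by simpa [Fin.ext_iff] using hx₁ e
  have h0 : opL C g f (faceX 0 x) (faceV C 0 x v) = opL C g (opL C g f) x v := by
    have e := hassoc _ _ _ h.1 h.2 (g (v 0)) (g (v 1))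
      (f (fun j => x j.succ.succ) fun j => v j.succ.succ)
    rw [← hg _ _ h01] at e
    exact e
  have hs : ∀ l : Fin (n + 1), opL C g f (faceX l.succ x) (faceV C l.succ x v) =
      C (x 0) (x (Fin.last _)) (g (v 0)) (f (faceX l fun j => x j.succ)
        (faceV C l (fun j => x j.succ) fun j => v j.succ)) := by
    intro l
    have hX : (fun j : Fin (n + 1) => faceX l.succ x j.succ) = faceX l fun j => x j.succ := by
      funext j
      simp only [faceX_apply, Fin.val_succ]
      split_ifs <;> first | omega | rfl
    have hV : (fun j : Fin (n + 1) => faceV C l.succ x v j.succ) =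
        faceV C l (fun j => x j.succ) fun j => v j.succ := by
      funext j
      simp only [faceV, Fin.val_succ, Fin.ext_iff]
      split_ifs <;> first | omega | rfl
    have hl : faceX l.succ x (Fin.last (n + 1)) = x (Fin.last (n + 2)) := by
      rw [faceX_apply, if_neg (by simp; omega)]
      rfl
    have hz : faceX l.succ x 0 = x 0 := by
      rw [faceX_apply, if_pos (by simp)]
      rfl
    have hvz : faceV C l.succ x v 0 = v 0 := by
      rw [faceV, if_pos (by simp)]
      rfl
    simp only [opL, hX, hV, hl, hz, hvz]
  rw [opM, Fin.sum_univ_succ, h0]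
  simp only [hs]
  simp only [opL, opM, sumR, smulR, Fin.val_zero, zero_add, pow_one, neg_smul, one_smul,
    sub_eq_add_neg, ← Finset.sum_neg_distrib, Fin.val_succ, pow_succ _ (_ + 1), mul_neg_one]

/-- The last inner face of the right term is the iterated right action, by associativity; the
other inner faces act on the argument of the right term. -/
theorem opM_opR {C : Pt D → Pt D → V → V → V} (hbil : IsBilin C) (hassoc : AssocF3 C)
    {n : ℕ} (f : (Fin (n + 1) → Pt D) → (Fin (n + 1) → V) → V)
    {x : Fin (n + 3) → Pt D} (hx : InChain x) (v : Fin (n + 3) → V) :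
    opM C (opR C f) x v = -opR C (opM C f) x v - opR C (opR C f) x v := by
  have smulL : ∀ p q (c : ℂ) u w, C p q (c • u) w = c • C p q u w :=
    fun p q c u w => ((hbil p q).1 w).map_smul c u
  have sumL : ∀ p q w (F : Fin (n + 1) → V), C p q (∑ k, F k) w = ∑ k, C p q (F k) w :=
    fun p q w F => map_sum ((hbil p q).1 w).mk' F Finset.univ
  have h := hx.triple ⟨n, by omega⟩ ⟨n + 1, by omega⟩ (Fin.last _)
    (by simp [Fin.lt_def]) (by simp [Fin.lt_def])
  have h0 : opR C f (faceX (Fin.last (n + 1)) x) (faceV C (Fin.last (n + 1)) x v) =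
      (-1 : ℂ) ^ (n + 2) • C (x ⟨n + 1, by omega⟩) (x (Fin.last _))
        (C (x ⟨n, by omega⟩) (x ⟨n + 1, by omega⟩)
          (f (fun j => x j.castSucc.castSucc) fun j => v j.castSucc.castSucc)
          (v ⟨n + 1, by omega⟩)) (v (Fin.last _)) := by
    have hX : (fun j : Fin (n + 1) => faceX (Fin.last (n + 1)) x j.castSucc) =
        fun j => x j.castSucc.castSucc := by
      funext j
      rw [faceX_apply, if_pos (by simp; omega)]
    have hV : (fun j : Fin (n + 1) => faceV C (Fin.last (n + 1)) x v j.castSucc) =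
        fun j => v j.castSucc.castSucc := by
      funext j
      rw [faceV, if_pos (by simp; omega)]
    have hl : faceX (Fin.last (n + 1)) x (Fin.last (n + 1)) = x (Fin.last (n + 2)) := by
      rw [faceX_apply, if_neg (by simp)]
      rfl
    have hz : faceX (Fin.last (n + 1)) x ⟨n + 1 - 1, by omega⟩ = x ⟨n, by omega⟩ := by
      rw [faceX_apply, if_pos (by simp)]
      rfl
    have hvl : faceV C (Fin.last (n + 1)) x v (Fin.last (n + 1)) =
        C (x ⟨n + 1, by omega⟩) (x (Fin.last _)) (v ⟨n + 1, by omega⟩) (v (Fin.last _)) := by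
      rw [faceV, if_neg (by simp), if_pos rfl]
      rfl
    simp only [opR, hX, hV, hl, hz, hvl]
    rw [hassoc _ _ _ h.1 h.2]
  have hs : ∀ l : Fin (n + 1), opR C f (faceX l.castSucc x) (faceV C l.castSucc x v) =
      (-1 : ℂ) ^ (n + 2) • C (x ⟨n + 1, by omega⟩) (x (Fin.last _))
        (f (faceX l fun j => x j.castSucc) (faceV C l (fun j => x j.castSucc) fun j => v j.castSucc)) (v (Fin.last _)) := by
    intro l
    have hX : (fun j : Fin (n + 1) => faceX l.castSucc x j.castSucc) =
        faceX l fun j => x j.castSucc := by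
      funext j
      simp only [faceX_apply, Fin.val_castSucc]
      split_ifs <;> first | omega | rfl
    have hV : (fun j : Fin (n + 1) => faceV C l.castSucc x v j.castSucc) =
        faceV C l (fun j => x j.castSucc) fun j => v j.castSucc := by
      funext j
      simp only [faceV, Fin.val_castSucc, Fin.ext_iff]
      split_ifs <;> first | omega | rfl
    have hl : faceX l.castSucc x (Fin.last (n + 1)) = x (Fin.last (n + 2)) := by
      rw [faceX_apply, if_neg (by simp)]
      rfl
    have hz : faceX l.castSucc x ⟨n + 1 - 1, by omega⟩ = x ⟨n + 1, by omega⟩ := by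
      rw [faceX_apply, if_neg (by simp; omega)]
      rfl
    have hvl : faceV C l.castSucc x v (Fin.last (n + 1)) = v (Fin.last (n + 2)) := by
      rw [faceV, if_neg (by simp), if_neg (by simp [Fin.ext_iff]; omega)]
      rfl
    simp only [opR, hX, hV, hl, hz, hvl]
  rw [opM, Fin.sum_univ_castSucc, h0]
  simp only [hs]
  simp only [opR, opM, sumL, smulL, Finset.smul_sum, sub_eq_add_neg, ← Finset.sum_neg_distrib]
  congr 1
  · refine Finset.sum_congr rfl fun l _ => ?_
    rw [smul_smul, smul_smul, ← neg_smul]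
    congr 1
    simp only [Fin.val_castSucc]
    ring
  · rw [smul_smul, smul_smul, ← neg_smul]
    congr 1
    simp only [Fin.val_last]
    ring

/-- The twisted coboundary squares to zero on the chain domain. -/
theorem cobG_cobG {C : Pt D → Pt D → V → V → V} (hbil : IsBilin C) (hassoc : AssocF3 C)
    (g : V → V) (hg : ∀ p q : Pt D, p ≠ q → ∀ u w, g (C p q u w) = C p q (g u) (g w))
    {n : ℕ} (hn : 1 ≤ n) (f : (Fin n → Pt D) → (Fin n → V) → V)
    {x : Fin (n + 2) → Pt D} (hx₁ : Function.Injective x) (hx : InChain x)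
    (v : Fin (n + 2) → V) : cobG C g (cobG C g f) x v = 0 := by
  obtain ⟨n, rfl⟩ : ∃ m, n = m + 1 := ⟨n - 1, by omega⟩
  have hsplit : cobG C g (cobG C g f) x v =
      cobG C g (opL C g f) x v + cobG C g (opM C f) x v + cobG C g (opR C f) x v := by
    rw [← cobG_add hbil, ← cobG_add hbil]
    rfl
  rw [hsplit]
  simp only [cobG]
  rw [opM_opM hassoc f hx v, opM_opL hbil hassoc g hg f hx₁ hx v,
    opM_opR hbil hassoc f hx v, opR_opL hbil hassoc g f hx v]
  abel

/-- if `C` is even under `γ` and associative on `F₃`, then `b (b f) = 0` on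
`F_{n+2}` for every even or odd multilinear-map-valued function `f` on `M_n`, where each
application of `b` uses the even/odd formula according to the parity of its argument. -/
theorem stmt4 {D : ℕ} (hD : 1 ≤ D) {V : Type*} [AddCommGroup V] [Module ℂ V]
    (γ : V → V) (hγ : IsLinearMap ℂ γ) (hγγ : ∀ v : V, γ (γ v) = v)
    (C : Pt D → Pt D → V → V → V) (hbil : IsBilin C)
    (hCeven : ∀ x₁ x₂ : Pt D, x₁ ≠ x₂ → ∀ u w : V, γ (C x₁ x₂ (γ u) (γ w)) = C x₁ x₂ u w)
    (hassoc : AssocF3 C)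
    (n : ℕ) (hn : 1 ≤ n)
    (f : (Fin n → Pt D) → (Fin n → V) → V) (hf : IsMulti f)
    (hpar : IsEvenC γ f ∨ IsOddC γ f)
    (x : Fin (n + 2) → Pt D) (hx₁ : Function.Injective x) (hx₂ : InChain x)
    (v : Fin (n + 2) → V) :
    (IsEvenC γ f → cobE C (cobE C f) x v = 0) ∧
    (IsOddC γ f → cobO C γ (cobO C γ f) x v = 0) := by
  refine ⟨fun _ => ?_, fun _ => ?_⟩
  · rw [cobE_eq, cobE_eq]
    exact cobG_cobG hbil hassoc id (fun _ _ _ _ _ => rfl) hn f hx₁ hx₂ v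
  · have hg : ∀ p q : Pt D, p ≠ q → ∀ u w, γ (C p q u w) = C p q (γ u) (γ w) := by
      intro p q hpq u w
      have := hCeven p q hpq (γ u) (γ w)
      rwa [hγγ, hγγ] at this
    rw [cobO_eq, cobO_eq]
    simp only [cobG_neg hbil, neg_neg]
    exact cobG_cobG hbil hassoc γ hg hn f hx₁ hx₂ v
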